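/- arXiv:0811.3496 — 2 statements merged into one kernel-verified Lean document; each statement's English description precedes it below -/
import Mathlib

section
/- Given any discrete-time interconnection Λ ∈ ℝ^{p×p} (not necessarily connected), there exists α > 0 such that for every map Q : ℕ → Q̄_n, the solution of x(k+1) = (I_{np} + (Λ − I_p) ⊗ Q_k) x(k) satisfies |x(k)| ≤ α |x(0)| for all k ∈ ℕ. -/
open Matrix Filter
open scoped Kronecker

noncomputable section

/-- Euclidean norm of a vector. -/
def eunorm {ι : Type*} [Fintype ι] (v : ι → ℝ) : ℝ := Real.sqrt (∑ i, v i ^ 2)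

/-- Spectral (induced 2-) norm of a matrix. -/
def specNorm {m n : Type*} [Fintype m] [Fintype n] (M : Matrix m n ℝ) : ℝ :=
  sSup {c : ℝ | ∃ v : n → ℝ, eunorm v ≤ 1 ∧ c = eunorm (M.mulVec v)}

/-- Smallest singular value of a matrix. -/
def sigmaMin {m n : Type*} [Fintype m] [Fintype n] (M : Matrix m n ℝ) : ℝ :=
  sInf {c : ℝ | ∃ v : n → ℝ, eunorm v = 1 ∧ c = eunorm (M.mulVec v)}

/-- Largest singular value of a matrix. -/
def sigmaMax {m n : Type*} [Fintype m] [Fintype n] (M : Matrix m n ℝ) : ℝ :=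
  sSup {c : ℝ | ∃ v : n → ℝ, eunorm v = 1 ∧ c = eunorm (M.mulVec v)}

/-- A discrete-time interconnection matrix: entrywise nonnegative and row-stochastic. -/
def IsInterconnectionDT {p : ℕ} (Λ : Matrix (Fin p) (Fin p) ℝ) : Prop :=
  (∀ i j, 0 ≤ Λ i j) ∧ ∀ i, ∑ j, Λ i j = 1

/-- Connectedness of the graph of a matrix (edge `(i,j)` iff the `(i,j)` entry is positive):
there is a node to which there is a directed path from every other node. -/
def ConnectedMat {p : ℕ} (Λ : Matrix (Fin p) (Fin p) ℝ) : Prop :=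
  ∃ v : Fin p, ∀ u : Fin p, Relation.ReflTransGen (fun i j => 0 < Λ i j) u v

/-- Membership in `Q̄_n`: symmetric positive semidefinite with spectral norm at most 1. -/
def InQbar {n : ℕ} (R : Matrix (Fin n) (Fin n) ℝ) : Prop :=
  R.PosSemidef ∧ specNorm R ≤ 1

/-- `δ(ε, N) = ε⁴/(16 N⁸ n⁴)` (discrete time). -/
def deltaDT (n : ℕ) (ε : ℝ) (N : ℕ) : ℝ := ε ^ 4 / (16 * (N : ℝ) ^ 8 * (n : ℝ) ^ 4)

/-- Sufficient excitation for `Q : ℕ → Q_n` (discrete-time sense). -/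
def SuffExcitingDT {n : ℕ} (Q : ℕ → Matrix (Fin n) (Fin n) ℝ) : Prop :=
  ∃ (ε : ℕ → ℝ) (N : ℕ → ℕ), (∀ i, 0 < ε i) ∧ (∀ i, 1 ≤ N i) ∧
    (∀ i, ε i ≤ sigmaMin (∑ k ∈ Finset.Ico (∑ j ∈ Finset.range i, N j)
      ((∑ j ∈ Finset.range i, N j) + N i), Q k)) ∧
    Tendsto (fun M => ∑ i ∈ Finset.range M, deltaDT n (ε i) (N i)) atTop atTop

/-- Persistence of excitation for `Q : ℕ → Q_n` (discrete-time sense). -/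
def PersExcitingDT {n : ℕ} (Q : ℕ → Matrix (Fin n) (Fin n) ℝ) : Prop :=
  ∃ (ε : ℝ) (N : ℕ), 0 < ε ∧ 1 ≤ N ∧ ∀ k₀ : ℕ,
    ε ≤ sigmaMin (∑ k ∈ Finset.Ico k₀ (k₀ + N), Q k)

/-!
A matrix `Λ` with bounded powers admits `P ≥ 1` with `Λᵀ P Λ ≤ P`. The powers of `Λ` have an
idempotent cluster point `e` commuting with `Λ`. A fixed point of `X ↦ Λᵀ X Λ`, found by averaging
along an orbit, dominates `eᵀ e`; some power of `Λ` contracts the range of `1 - e`, so a finite sum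
of the conjugates of `(1 - e)ᵀ (1 - e)` by powers of `Λ` takes care of the complement.

For such a `P`, every `0 ≤ Q ≤ 1`, and `M = 1 + (Λ - 1) ⊗ Q`,
`P ⊗ 1 - Mᵀ (P ⊗ 1) M = (P - Λᵀ P Λ) ⊗ Q + (Λ - 1)ᵀ P (Λ - 1) ⊗ (Q - Q²) ≥ 0`,
so `x ↦ xᵀ (P ⊗ 1) x` is a Lyapunov function common to all the admissible dynamics.
-/

section PowClusterPt

variable {M : Type*} [Monoid M] [TopologicalSpace M] [ContinuousMul M] {a x y : M}

lemma mapClusterPt_pow_mul (hx : MapClusterPt x atTop (a ^ · : ℕ → M))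
    (hy : MapClusterPt y atTop (a ^ · : ℕ → M)) : MapClusterPt (x * y) atTop (a ^ · : ℕ → M) := by
  refine mapClusterPt_iff_frequently.2 fun U hU => frequently_atTop.2 fun N => ?_
  obtain ⟨V, hV, W, hW, hVW⟩ := mem_nhds_prod_iff.1 (continuous_mul.continuousAt (x := (x, y)) hU)
  obtain ⟨k, hNk, hk⟩ := frequently_atTop.1 (hx.frequently hV) N
  obtain ⟨l, hl⟩ := (hy.frequently hW).exists
  refine ⟨k + l, by lia, ?_⟩
  rw [pow_add]
  exact hVW (Set.mk_mem_prod hk hl)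

lemma exists_isIdempotentElem_mapClusterPt_pow [T2Space M] {K : Set M} (hK : IsCompact K)
    (ha : ∀ k : ℕ, a ^ k ∈ K) :
    ∃ e, IsIdempotentElem e ∧ MapClusterPt e atTop (a ^ · : ℕ → M) := by
  have hpow : ∀ᶠ k in atTop, a ^ k ∈ K := Eventually.of_forall ha
  have hsub : {x | MapClusterPt x atTop (a ^ · : ℕ → M)} ⊆ K := fun x hx =>
    hK.isClosed.mem_of_mapClusterPt hx hpow
  obtain ⟨x, -, hx⟩ := hK.exists_mapClusterPt (tendsto_principal.2 hpow)
  obtain ⟨e, he, hee⟩ := exists_idempotent_in_compact_subsemigroup continuous_mul_const _ ⟨x, hx⟩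
    (hK.of_isClosed_subset isClosed_setOfPred_clusterPt hsub)
    fun x hx y hy => mapClusterPt_pow_mul hx hy
  exact ⟨e, hee, he⟩

lemma commute_of_mapClusterPt_pow [T2Space M] (hx : MapClusterPt x atTop (a ^ · : ℕ → M)) :
    Commute a x :=
  (isClosed_eq (continuous_const_mul a) (continuous_mul_const a)).mem_of_mapClusterPt hx
    (Eventually.of_forall fun k => Commute.self_pow a k)

end PowClusterPt

section MeanErgodic

open scoped Topology

variable {E : Type*} [NormedAddCommGroup E] [NormedSpace ℝ E]

lemma birkhoffAverage_id_mem_closedConvexHull (T : E → E) (x : E) {n : ℕ} (hn : n ≠ 0) :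
    birkhoffAverage ℝ T id n x ∈ closedConvexHull ℝ (Set.range (T^[·] x)) := by
  rw [birkhoffAverage, birkhoffSum, Finset.smul_sum]
  refine convex_closedConvexHull.sum_mem (fun _ _ => by positivity) ?_
    fun k _ => subset_closedConvexHull (Set.mem_range_self k)
  rw [Finset.sum_const, Finset.card_range, nsmul_eq_mul, mul_inv_cancel₀ (by positivity)]

lemma exists_fixedPoint_mem_closedConvexHull_orbit [ProperSpace E] (T : E →L[ℝ] E) {x : E}
    (hx : Bornology.IsBounded (Set.range (T^[·] x))) :
    ∃ y ∈ closedConvexHull ℝ (Set.range (T^[·] x)), T y = y := by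
  have hbdd : Bornology.IsBounded (closedConvexHull ℝ (Set.range (T^[·] x))) := by
    rw [closedConvexHull_eq_closure_convexHull]
    exact (isBounded_convexHull.2 hx).closure
  obtain ⟨y, hy, φ, hφ, hlim⟩ :=
    (Metric.isCompact_of_isClosed_isBounded isClosed_closedConvexHull hbdd).tendsto_subseq'
      (x := fun n => birkhoffAverage ℝ T id n x) <|
      ((eventually_ne_atTop 0).mono fun n hn =>
        birkhoffAverage_id_mem_closedConvexHull T x hn).frequently
  have hdiff : Tendsto (fun n => T (birkhoffAverage ℝ T id n x) - birkhoffAverage ℝ T id n x)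
      atTop (𝓝 0) := by
    refine (tendsto_birkhoffAverage_apply_sub_birkhoffAverage ℝ (f := T) (g := id) hx).congr
      fun n => ?_
    rw [map_birkhoffAverage ℝ ℝ T]
    simp [birkhoffAverage, birkhoffSum, ← Function.iterate_succ_apply, Function.iterate_succ_apply']
  exact ⟨y, hy, sub_eq_zero.1 <| tendsto_nhds_unique
    (((T.continuous.tendsto y).comp hlim).sub hlim) (hdiff.comp hφ.tendsto_atTop)⟩

end MeanErgodic

section StarOrderedRing

variable {A : Type*} [Ring A] [StarRing A] [PartialOrder A] [StarOrderedRing A]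

lemma mul_self_le_self {q : A} (h₀ : 0 ≤ q) (h₁ : q ≤ 1) : q * q ≤ q := by
  have h₁' : 0 ≤ 1 - q := sub_nonneg.2 h₁
  have hq : q - q * q = q * (1 - q) * q + (1 - q) * q * (1 - q) := by noncomm_ring
  exact sub_nonneg.1 <| hq ▸ add_nonneg ((IsSelfAdjoint.of_nonneg h₀).conjugate_nonneg h₁')
    ((IsSelfAdjoint.of_nonneg h₁').conjugate_nonneg h₀)

lemma one_le_two_nsmul_star_mul_self_add (e : A) :
    1 ≤ 2 • (star e * e + star (1 - e) * (1 - e)) := by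
  have h : 2 • (star e * e + star (1 - e) * (1 - e)) - 1 = star (2 • e - 1) * (2 • e - 1) := by
    simp only [star_sub, star_one, star_nsmul]
    noncomm_ring
  exact sub_nonneg.1 (h ▸ star_mul_self_nonneg _)

lemma exists_le_star_mul_mul_le {a s : A} {m : ℕ} (hs : 0 ≤ s) (hm : m ≠ 0)
    (h : star (a ^ m) * s * a ^ m ≤ s) : ∃ b, s ≤ b ∧ star a * b * a ≤ b := by
  set f : ℕ → A := fun k => star (a ^ k) * s * a ^ k with hf
  have hf₀ : f 0 = s := by simp [hf]
  have hf_succ (k : ℕ) : star a * f k * a = f (k + 1) := by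
    simp only [hf, pow_succ, star_mul, mul_assoc]
  have hf_nonneg (k : ℕ) : 0 ≤ f k := star_left_conjugate_nonneg hs _
  refine ⟨∑ k ∈ Finset.range m, f k, ?_, ?_⟩
  · exact hf₀ ▸ Finset.single_le_sum (fun k _ => hf_nonneg k)
      (Finset.mem_range.2 (Nat.pos_of_ne_zero hm))
  · calc star a * (∑ k ∈ Finset.range m, f k) * a
        = ∑ k ∈ Finset.range m, f (k + 1) := by
          simp only [Finset.mul_sum, Finset.sum_mul, hf_succ]
      _ = ∑ k ∈ Finset.range m, f k + (f m - f 0) := by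
          rw [← add_sub_assoc, ← Finset.sum_range_succ, Finset.sum_range_succ',
            add_sub_cancel_right]
      _ ≤ ∑ k ∈ Finset.range m, f k :=
          add_le_of_nonpos_right (sub_nonpos.2 (h.trans_eq hf₀.symm))

end StarOrderedRing

/-- An element of a normed ring is power-bounded if the norms of its powers are bounded. For
matrices this is what the existence of a quadratic Lyapunov function requires of `Λ`; it does not
depend on the norm chosen, which is the spectral norm below. -/
def IsPowerBounded {A : Type*} [NormedRing A] (a : A) : Prop :=
  ∃ C : ℝ, ∀ k : ℕ, ‖a ^ k‖ ≤ C

section NormedStarRing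

variable {A : Type*} [NormedRing A] [StarRing A] [NormedAlgebra ℝ A] [PartialOrder A]
  [StarOrderedRing A] {a e : A} {C : ℝ}

lemma le_norm_smul_one [IsometricContinuousFunctionalCalculus ℝ A IsSelfAdjoint] {b : A}
    (hb : IsSelfAdjoint b) : b ≤ ‖b‖ • 1 := by
  rw [← Algebra.algebraMap_eq_smul_one]
  exact le_algebraMap_of_spectrum_le fun r hr =>
    (Real.le_norm_self r).trans (IsometricContinuousFunctionalCalculus.norm_spectrum_le b hr)

variable [CStarRing A]

lemma star_mul_mul_self_le_norm_sq_smul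
    [IsometricContinuousFunctionalCalculus ℝ A IsSelfAdjoint] (a c : A) :
    star (a * c) * (a * c) ≤ ‖a‖ ^ 2 • (star c * c) := by
  have h := star_left_conjugate_le_conjugate (le_norm_smul_one (IsSelfAdjoint.star_mul_self a)) c
  rwa [CStarRing.norm_star_mul_self, ← sq, mul_smul_comm, mul_one, smul_mul_assoc,
    mul_assoc, mul_assoc, ← mul_assoc (star c), ← star_mul] at h

variable [StarModule ℝ A]

lemma exists_star_mul_mul_eq_of_forall_le [OrderClosedTopology A] [ProperSpace A] {x s : A}
    (ha : ∀ k : ℕ, ‖a ^ k‖ ≤ C) (hs : ∀ k : ℕ, s ≤ star (a ^ k) * x * a ^ k) :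
    ∃ p, s ≤ p ∧ star a * p * a = p := by
  set T : A →L[ℝ] A := ContinuousLinearMap.mulLeftRight ℝ A (star a) a
  have hiter (k : ℕ) : T^[k] x = star (a ^ k) * x * a ^ k := by
    induction k with
    | zero => simp
    | succ k ih =>
      rw [Function.iterate_succ_apply', ih, ContinuousLinearMap.mulLeftRight_apply, pow_succ,
        star_mul]
      simp only [mul_assoc]
  have hbdd : Bornology.IsBounded (Set.range (T^[·] x)) := by
    refine isBounded_iff_forall_norm_le.2 ⟨C * ‖x‖ * C, Set.forall_mem_range.2 fun k => ?_⟩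
    have hC : 0 ≤ C := (norm_nonneg _).trans (ha k)
    calc ‖T^[k] x‖ ≤ ‖a ^ k‖ * ‖x‖ * ‖a ^ k‖ := by
          simpa only [hiter, norm_star] using
            norm_mul₃_le (a := star (a ^ k)) (b := x) (c := a ^ k)
      _ ≤ C * ‖x‖ * C := by gcongr <;> exact ha k
  obtain ⟨p, hp, hTp⟩ := exists_fixedPoint_mem_closedConvexHull_orbit T hbdd
  have hle : Set.range (T^[·] x) ⊆ Set.Ici s :=
    Set.range_subset_iff.2 fun k => (hs k).trans_eq (hiter k).symm
  exact ⟨p, closedConvexHull_min hle (convex_Ici s) isClosed_Ici hp, hTp⟩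

variable [IsometricContinuousFunctionalCalculus ℝ A IsSelfAdjoint]

lemma star_mul_self_le_of_mapClusterPt_pow [OrderClosedTopology A] (ha : ∀ k : ℕ, ‖a ^ k‖ ≤ C)
    (he : MapClusterPt e atTop (a ^ · : ℕ → A)) (k : ℕ) :
    star e * e ≤ C ^ 2 • (star (a ^ k) * a ^ k) := by
  refine (isClosed_le (f := fun x : A => star x * x) (by fun_prop)
    continuous_const).mem_of_mapClusterPt he ?_
  filter_upwards [eventually_ge_atTop k] with l hl
  calc star (a ^ l) * a ^ l = star (a ^ (l - k) * a ^ k) * (a ^ (l - k) * a ^ k) := by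
        rw [← pow_add, Nat.sub_add_cancel hl]
    _ ≤ ‖a ^ (l - k)‖ ^ 2 • (star (a ^ k) * a ^ k) := star_mul_mul_self_le_norm_sq_smul _ _
    _ ≤ C ^ 2 • (star (a ^ k) * a ^ k) :=
        smul_le_smul_of_nonneg_right (pow_le_pow_left₀ (norm_nonneg _) (ha _) 2)
          (star_mul_self_nonneg _)

lemma star_mul_mul_le_of_norm_sub_le_one (he : IsIdempotentElem e) (hae : Commute a e)
    (h : ‖a - e‖ ≤ 1) : star a * (star (1 - e) * (1 - e)) * a ≤ star (1 - e) * (1 - e) := by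
  have hfa : (1 - e) * a = (a - e) * (1 - e) := by
    linear_combination (norm := noncomm_ring) hae.eq - he.eq
  calc star a * (star (1 - e) * (1 - e)) * a
      = star ((a - e) * (1 - e)) * ((a - e) * (1 - e)) := by
        rw [← hfa, star_mul]
        simp only [mul_assoc]
    _ ≤ ‖a - e‖ ^ 2 • (star (1 - e) * (1 - e)) := star_mul_mul_self_le_norm_sq_smul _ _
    _ ≤ star (1 - e) * (1 - e) :=
        smul_le_of_le_one_left (star_mul_self_nonneg _) (pow_le_one₀ (norm_nonneg _) h)

lemma IsPowerBounded.exists_one_le_star_mul_mul_le [OrderClosedTopology A] [ProperSpace A]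
    (ha : IsPowerBounded a) : ∃ p, 1 ≤ p ∧ star a * p * a ≤ p := by
  obtain ⟨C, hC⟩ := ha
  obtain ⟨e, he, hcl⟩ := exists_isIdempotentElem_mapClusterPt_pow
    (isCompact_closedBall (0 : A) C) fun k => mem_closedBall_zero_iff.2 (hC k)
  obtain ⟨p, hep, hp⟩ := exists_star_mul_mul_eq_of_forall_le (x := C ^ 2 • 1) hC fun k => by
    simpa using star_mul_self_le_of_mapClusterPt_pow hC hcl k
  obtain ⟨m, hm, hm₀⟩ := ((hcl.frequently (Metric.ball_mem_nhds e one_pos)).and_eventually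
    (eventually_ne_atTop 0)).exists
  obtain ⟨q, hfq, hq⟩ := exists_le_star_mul_mul_le (star_mul_self_nonneg (1 - e)) hm₀ <|
    star_mul_mul_le_of_norm_sub_le_one he ((commute_of_mapClusterPt_pow hcl).pow_left m)
      (mem_ball_iff_norm.1 hm).le
  refine ⟨2 • (p + q), ?_, ?_⟩
  · exact (one_le_two_nsmul_star_mul_self_add e).trans
      (nsmul_le_nsmul_right (add_le_add hep hfq) 2)
  · calc star a * (2 • (p + q)) * a = 2 • (star a * p * a + star a * q * a) := by noncomm_ring
      _ ≤ 2 • (p + q) := nsmul_le_nsmul_right (add_le_add hp.le hq) 2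

end NormedStarRing

section Matrix

open scoped MatrixOrder ComplexOrder

section Kronecker

variable {R l m n p : Type*} [NonUnitalNonAssocRing R]

lemma sub_kronecker (A B : Matrix l m R) (C : Matrix n p R) :
    (A - B) ⊗ₖ C = A ⊗ₖ C - B ⊗ₖ C := by
  ext
  exact sub_mul _ _ _

lemma kronecker_sub (A : Matrix l m R) (B C : Matrix n p R) :
    A ⊗ₖ (B - C) = A ⊗ₖ B - A ⊗ₖ C := by
  ext
  exact mul_sub _ _ _

variable {ι κ 𝕜 : Type*} [Finite ι] [Finite κ] [RCLike 𝕜]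

lemma kronecker_nonneg {A : Matrix ι ι 𝕜} {B : Matrix κ κ 𝕜} (hA : 0 ≤ A)
    (hB : 0 ≤ B) : 0 ≤ A ⊗ₖ B := by
  cases nonempty_fintype ι
  cases nonempty_fintype κ
  exact (hA.posSemidef.kronecker hB.posSemidef).nonneg

lemma kronecker_one_mono [DecidableEq κ] {A B : Matrix ι ι 𝕜} (h : A ≤ B) :
    A ⊗ₖ (1 : Matrix κ κ 𝕜) ≤ B ⊗ₖ 1 := by
  rw [← sub_nonneg, ← sub_kronecker]
  exact kronecker_nonneg (sub_nonneg.2 h) PosSemidef.one.nonneg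

end Kronecker

section Lyapunov

variable {ι κ 𝕜 : Type*} [Fintype ι]

lemma eunorm_eq_sqrt_dotProduct (v : ι → ℝ) : eunorm v = √(v ⬝ᵥ v) := by
  simp only [eunorm, dotProduct, sq]

lemma dotProduct_mulVec_mono {A B : Matrix ι ι ℝ} (h : A ≤ B) (v : ι → ℝ) :
    v ⬝ᵥ A *ᵥ v ≤ v ⬝ᵥ B *ᵥ v := by
  have hv := (Matrix.le_iff.1 h).dotProduct_mulVec_nonneg v
  rwa [star_trivial, sub_mulVec, dotProduct_sub, sub_nonneg] at hv

variable [DecidableEq ι] [Fintype κ] [DecidableEq κ] [RCLike 𝕜]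

lemma star_mul_kronecker_one_mul_le {A P : Matrix ι ι 𝕜} {Q : Matrix κ κ 𝕜} (hP : 0 ≤ P)
    (hA : star A * P * A ≤ P) (hQ₀ : 0 ≤ Q) (hQ₁ : Q ≤ 1) :
    star (1 + (A - 1) ⊗ₖ Q) * (P ⊗ₖ 1) * (1 + (A - 1) ⊗ₖ Q) ≤ P ⊗ₖ 1 := by
  have hQ : star Q = Q := (IsSelfAdjoint.of_nonneg hQ₀).star_eq
  have hdiff : P ⊗ₖ (1 : Matrix κ κ 𝕜)
        - star (1 + (A - 1) ⊗ₖ Q) * (P ⊗ₖ 1) * (1 + (A - 1) ⊗ₖ Q)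
      = (P - star A * P * A) ⊗ₖ Q + (star (A - 1) * P * (A - 1)) ⊗ₖ (Q - Q * Q) := by
    simp only [star_eq_conjTranspose] at hQ ⊢
    simp only [← one_kronecker_one (α := 𝕜) (m := ι) (n := κ), conjTranspose_add,
      conjTranspose_sub, conjTranspose_kronecker, conjTranspose_one, hQ, add_mul, mul_add,
      sub_mul, mul_sub, one_mul, mul_one, ← mul_kronecker_mul, sub_kronecker, kronecker_sub]
    abel
  rw [← sub_nonneg, hdiff]
  exact add_nonneg (kronecker_nonneg (sub_nonneg.2 hA) hQ₀)
    (kronecker_nonneg (star_left_conjugate_nonneg hP _) (sub_nonneg.2 (mul_self_le_self hQ₀ hQ₁)))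

lemma eunorm_le_of_lyapunov {M : ℕ → Matrix ι ι ℝ} {W : Matrix ι ι ℝ} {c : ℝ}
    (hM : ∀ k, star (M k) * W * M k ≤ W) (hW : 1 ≤ W) (hWc : W ≤ c • 1) {x : ℕ → ι → ℝ}
    (hx : ∀ k, x (k + 1) = M k *ᵥ x k) (k : ℕ) : eunorm (x k) ≤ √c * eunorm (x 0) := by
  have hanti : Antitone fun k => x k ⬝ᵥ W *ᵥ x k := antitone_nat_of_succ_le fun k => by
    calc x (k + 1) ⬝ᵥ W *ᵥ x (k + 1) = x k ⬝ᵥ (star (M k) * W * M k) *ᵥ x k := by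
          rw [hx, star_eq_conjTranspose, conjTranspose_eq_transpose_of_trivial, mul_assoc,
            ← mulVec_mulVec, ← mulVec_mulVec, dotProduct_mulVec (x k), vecMul_transpose]
      _ ≤ x k ⬝ᵥ W *ᵥ x k := dotProduct_mulVec_mono (hM k) _
  have hself : 0 ≤ x 0 ⬝ᵥ x 0 := by simpa using dotProduct_star_self_nonneg (x 0)
  rw [eunorm_eq_sqrt_dotProduct, eunorm_eq_sqrt_dotProduct, ← Real.sqrt_mul' _ hself]
  refine Real.sqrt_le_sqrt ?_
  calc x k ⬝ᵥ x k = x k ⬝ᵥ 1 *ᵥ x k := by rw [one_mulVec]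
    _ ≤ x k ⬝ᵥ W *ᵥ x k := dotProduct_mulVec_mono hW _
    _ ≤ x 0 ⬝ᵥ W *ᵥ x 0 := hanti k.zero_le
    _ ≤ x 0 ⬝ᵥ (c • 1) *ᵥ x 0 := dotProduct_mulVec_mono hWc _
    _ = c * (x 0 ⬝ᵥ x 0) := by rw [smul_mulVec, one_mulVec, dotProduct_smul, smul_eq_mul]

end Lyapunov

open scoped Matrix.Norms.L2Operator

section Norm

variable {ι κ 𝕜 : Type*} [RCLike 𝕜]

lemma isClosed_posSemidef [Finite ι] : IsClosed {A : Matrix ι ι 𝕜 | A.PosSemidef} := by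
  cases nonempty_fintype ι
  simp only [posSemidef_iff_dotProduct_mulVec, Set.ofPred_and, Set.ofPred_forall, IsHermitian]
  exact (isClosed_eq (by fun_prop) continuous_id).inter <| isClosed_iInter fun v =>
    isClosed_le continuous_const (by fun_prop)

instance instOrderClosedTopologyMatrix [Finite ι] : OrderClosedTopology (Matrix ι ι 𝕜) where
  isClosed_le' := isClosed_le_of_isClosed_nonneg <| by
    simpa only [nonneg_iff_posSemidef] using isClosed_posSemidef

variable [Fintype ι] [Fintype κ]

lemma eunorm_eq_norm_toLp (v : ι → ℝ) : eunorm v = ‖WithLp.toLp 2 v‖ := by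
  simp only [eunorm, EuclideanSpace.norm_eq, Real.norm_eq_abs, sq_abs]

variable [DecidableEq ι]

lemma specNorm_eq_l2_opNorm (M : Matrix κ ι ℝ) : specNorm M = ‖M‖ := by
  rw [specNorm, l2_opNorm_def, ← ContinuousLinearMap.sSup_unitClosedBall_eq_norm]
  congr 1
  ext c
  simp only [Set.mem_image, mem_closedBall_zero_iff, eunorm_eq_norm_toLp]
  constructor
  · rintro ⟨v, hv, rfl⟩
    exact ⟨WithLp.toLp 2 v, hv, rfl⟩
  · rintro ⟨v, hv, rfl⟩
    exact ⟨v.ofLp, hv, rfl⟩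

lemma le_one_of_specNorm_le_one {Q : Matrix ι ι ℝ} (hQ : Q.IsHermitian) (h : specNorm Q ≤ 1) :
    Q ≤ 1 :=
  (le_norm_smul_one hQ.isSelfAdjoint).trans
    (smul_le_of_le_one_left zero_le_one (specNorm_eq_l2_opNorm Q ▸ h))

lemma isPowerBounded_of_mem_rowStochastic {Λ : Matrix ι ι ℝ} (hΛ : Λ ∈ rowStochastic ℝ ι) :
    IsPowerBounded Λ := by
  have hcompact : IsCompact {A : Matrix ι ι ℝ | ∀ i j, A i j ∈ Set.Icc 0 1} :=
    isCompact_pi_infinite fun _ => isCompact_pi_infinite fun _ => isCompact_Icc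
  obtain ⟨C, hC⟩ := hcompact.isBounded.exists_norm_le
  refine ⟨C, fun k => hC _ fun i j => ?_⟩
  have hk : Λ ^ k ∈ rowStochastic ℝ ι := pow_mem hΛ k
  exact ⟨nonneg_of_mem_rowStochastic hk, le_one_of_mem_rowStochastic hk⟩

end Norm

theorem stmt13_general {ι : Type*} [Fintype ι] [DecidableEq ι] (Λ : Matrix ι ι ℝ)
    (hΛ : IsPowerBounded Λ) :
    ∃ α : ℝ, 0 < α ∧
      ∀ (κ : Type*) [Fintype κ] [DecidableEq κ] (Q : ℕ → Matrix κ κ ℝ),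
        (∀ k, (Q k).PosSemidef ∧ specNorm (Q k) ≤ 1) →
          ∀ x : ℕ → ι × κ → ℝ, (∀ k, x (k + 1) = (1 + (Λ - 1) ⊗ₖ Q k) *ᵥ x k) →
            ∀ k, eunorm (x k) ≤ α * eunorm (x 0) := by
  obtain ⟨P, hP₁, hP⟩ := hΛ.exists_one_le_star_mul_mul_le
  have hP₀ : 0 ≤ P := zero_le_one.trans hP₁
  have hPc : P ≤ (‖P‖ + 1) • 1 := by
    rw [add_smul, one_smul]
    exact le_add_of_le_of_nonneg (le_norm_smul_one (.of_nonneg hP₀)) zero_le_one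
  refine ⟨√(‖P‖ + 1), by positivity, fun κ _ _ Q hQ x hx => eunorm_le_of_lyapunov (W := P ⊗ₖ 1)
    (fun k => ?_) ?_ ?_ hx⟩
  · exact star_mul_kronecker_one_mul_le hP₀ hP (hQ k).1.nonneg
      (le_one_of_specNorm_le_one (hQ k).1.isHermitian (hQ k).2)
  · simpa only [one_kronecker_one] using kronecker_one_mono (κ := κ) hP₁
  · simpa only [smul_kronecker, one_kronecker_one] using kronecker_one_mono (κ := κ) hPc

end Matrix

theorem stmt13 {p n : ℕ} (Λ : Matrix (Fin p) (Fin p) ℝ)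
    (hΛ : IsInterconnectionDT Λ) :
    ∃ α : ℝ, 0 < α ∧
      ∀ Q : ℕ → Matrix (Fin n) (Fin n) ℝ, (∀ k, InQbar (Q k)) →
        ∀ x : ℕ → (Fin p × Fin n) → ℝ,
          (∀ k : ℕ, x (k + 1)
            = ((1 : Matrix (Fin p × Fin n) (Fin p × Fin n) ℝ)
                + (Λ - 1) ⊗ₖ Q k).mulVec (x k)) →
          ∀ k : ℕ, eunorm (x k) ≤ α * eunorm (x 0) := by
  obtain ⟨α, hα, h⟩ :=
    stmt13_general Λ (isPowerBounded_of_mem_rowStochastic (mem_rowStochastic_iff_sum.2 hΛ))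
  exact ⟨α, hα, h (Fin n)⟩
end
end

section
/- Let Q : ℕ → Q̄_n, let ε > 0 be real and N ≥ 1 an integer. If σ_min(Σ_{k=0}^{N−1} Q_k) ≥ ε, then σ_min(Σ_{k=0}^{N−1} Q_k²) ≥ ε² / (N² n²). -/
open Matrix Filter
open scoped Kronecker

noncomputable section

/-! Let `ε ≤ σ_min(∑ Aₖ)`, with `N` summands. For a unit vector `v`, Cauchy–Schwarz over the index
`k` and then in `ℝⁿ` gives
`ε² ≤ |∑ Aₖ v|² ≤ N ∑ |Aₖ v|² = N ⟨v, (∑ Aₖᵀ Aₖ) v⟩ ≤ N |(∑ Aₖᵀ Aₖ) v|`,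
so `σ_min(∑ Aₖᵀ Aₖ) ≥ ε² / N`. For symmetric `Aₖ` the sum of the `Aₖᵀ Aₖ` is the sum of squares,
and `N ≤ N² n²`. -/

lemma eunorm_nonneg {ι : Type*} [Fintype ι] (v : ι → ℝ) : 0 ≤ eunorm v :=
  Real.sqrt_nonneg _

lemma eunorm_sq {ι : Type*} [Fintype ι] (v : ι → ℝ) : eunorm v ^ 2 = v ⬝ᵥ v := by
  simp only [eunorm, dotProduct, ← pow_two]
  exact Real.sq_sqrt (Finset.sum_nonneg fun _ _ => sq_nonneg _)

lemma dotProduct_le_eunorm_mul_eunorm {ι : Type*} [Fintype ι] (v w : ι → ℝ) :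
    v ⬝ᵥ w ≤ eunorm v * eunorm w :=
  Real.sum_mul_le_sqrt_mul_sqrt _ _ _

lemma exists_eunorm_eq_one {ι : Type*} [Fintype ι] [Nonempty ι] : ∃ v : ι → ℝ, eunorm v = 1 := by
  classical
  exact ⟨Pi.single (Classical.arbitrary ι) 1, by simp [eunorm, Pi.single_apply]⟩

lemma eunorm_sum_sq_le_card_mul_sum {ι κ : Type*} [Fintype ι] (s : Finset κ) (w : κ → ι → ℝ) :
    eunorm (∑ k ∈ s, w k) ^ 2 ≤ s.card * ∑ k ∈ s, eunorm (w k) ^ 2 := by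
  simp only [eunorm_sq, dotProduct, Finset.sum_apply, ← pow_two]
  rw [Finset.sum_comm, Finset.mul_sum]
  exact Finset.sum_le_sum fun i _ => sq_sum_le_card_mul_sum_sq

section SmallestSingularValue

variable {m n : Type*} [Fintype m] [Fintype n] {M : Matrix m n ℝ}

lemma sigmaMin_le_eunorm_mulVec {v : n → ℝ} (hv : eunorm v = 1) :
    sigmaMin M ≤ eunorm (M *ᵥ v) :=
  csInf_le ⟨0, by rintro _ ⟨w, _, rfl⟩; exact eunorm_nonneg _⟩ ⟨v, hv, rfl⟩

lemma le_sigmaMin [Nonempty n] {c : ℝ} (h : ∀ v, eunorm v = 1 → c ≤ eunorm (M *ᵥ v)) :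
    c ≤ sigmaMin M := by
  obtain ⟨v, hv⟩ := exists_eunorm_eq_one (ι := n)
  refine le_csInf ⟨_, v, hv, rfl⟩ ?_
  rintro _ ⟨w, hw, rfl⟩
  exact h w hw

lemma nonempty_of_sigmaMin_pos (h : 0 < sigmaMin M) : Nonempty n := by
  by_contra hn
  rw [not_nonempty_iff] at hn
  simp [sigmaMin, eunorm] at h

end SmallestSingularValue

section SumOfGramMatrices

variable {κ m n : Type*} [Fintype m] [Fintype n]

lemma eunorm_mulVec_sq (A : Matrix m n ℝ) (v : n → ℝ) :
    eunorm (A *ᵥ v) ^ 2 = v ⬝ᵥ ((Aᵀ * A) *ᵥ v) := by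
  rw [eunorm_sq, ← mulVec_mulVec, dotProduct_mulVec v, vecMul_transpose]

lemma eunorm_sum_mulVec_sq_le (s : Finset κ) (A : κ → Matrix m n ℝ) (v : n → ℝ) :
    eunorm ((∑ k ∈ s, A k) *ᵥ v) ^ 2 ≤
      s.card * (eunorm v * eunorm ((∑ k ∈ s, (A k)ᵀ * A k) *ᵥ v)) := by
  calc eunorm ((∑ k ∈ s, A k) *ᵥ v) ^ 2
      ≤ s.card * ∑ k ∈ s, eunorm (A k *ᵥ v) ^ 2 := by
        rw [sum_mulVec]
        exact eunorm_sum_sq_le_card_mul_sum s _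
    _ = s.card * (v ⬝ᵥ ((∑ k ∈ s, (A k)ᵀ * A k) *ᵥ v)) := by
        simp only [eunorm_mulVec_sq, sum_mulVec, dotProduct_sum]
    _ ≤ s.card * (eunorm v * eunorm ((∑ k ∈ s, (A k)ᵀ * A k) *ᵥ v)) := by
        gcongr
        exact dotProduct_le_eunorm_mul_eunorm _ _

theorem stmt14_general (s : Finset κ) (A : κ → Matrix m n ℝ) {ε : ℝ} (hε : 0 < ε)
    (h : ε ≤ sigmaMin (∑ k ∈ s, A k)) :
    ε ^ 2 / s.card ≤ sigmaMin (∑ k ∈ s, (A k)ᵀ * A k) := by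
  have : Nonempty n := nonempty_of_sigmaMin_pos (hε.trans_le h)
  refine le_sigmaMin fun v hv => div_le_of_le_mul₀ (Nat.cast_nonneg _) (eunorm_nonneg _) ?_
  calc ε ^ 2 ≤ eunorm ((∑ k ∈ s, A k) *ᵥ v) ^ 2 := by
        gcongr
        exact h.trans (sigmaMin_le_eunorm_mulVec hv)
    _ ≤ s.card * (eunorm v * eunorm ((∑ k ∈ s, (A k)ᵀ * A k) *ᵥ v)) :=
        eunorm_sum_mulVec_sq_le s A v
    _ = eunorm ((∑ k ∈ s, (A k)ᵀ * A k) *ᵥ v) * s.card := by rw [hv, one_mul, mul_comm]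

end SumOfGramMatrices

lemma sq_eq_transpose_mul_self {n R : Type*} [Fintype n] [DecidableEq n] [Semiring R]
    {A : Matrix n n R} (hA : A.IsSymm) : A ^ 2 = Aᵀ * A := by
  rw [hA.eq, sq]

-- For `n = 0` the left-hand side is `a / 0 = 0`.
lemma div_sq_mul_sq_le_div {a : ℝ} (ha : 0 ≤ a) (N n : ℕ) :
    a / ((N : ℝ) ^ 2 * (n : ℝ) ^ 2) ≤ a / N := by
  rcases N.eq_zero_or_pos with rfl | hN
  · simp
  rcases n.eq_zero_or_pos with rfl | hn
  · simpa using div_nonneg ha N.cast_nonneg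
  have hle : N ≤ N ^ 2 * n ^ 2 :=
    (Nat.le_self_pow two_ne_zero N).trans (Nat.le_mul_of_pos_right _ (pow_pos hn 2))
  gcongr
  exact_mod_cast hle

theorem stmt14 {n : ℕ} (Q : ℕ → Matrix (Fin n) (Fin n) ℝ)
    (hQ : ∀ k, InQbar (Q k))
    (ε : ℝ) (hε : 0 < ε) (N : ℕ) (hN : 1 ≤ N)
    (h : ε ≤ sigmaMin (∑ k ∈ Finset.range N, Q k)) :
    ε ^ 2 / ((N : ℝ) ^ 2 * (n : ℝ) ^ 2)
      ≤ sigmaMin (∑ k ∈ Finset.range N, Q k ^ 2) := by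
  have hsymm (k : ℕ) : (Q k).IsSymm := isHermitian_iff_isSymm.mp (hQ k).1.isHermitian
  refine (div_sq_mul_sq_le_div (sq_nonneg ε) N n).trans ?_
  simpa only [sq_eq_transpose_mul_self (hsymm _), Finset.card_range] using
    stmt14_general (Finset.range N) Q hε h
end
end
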